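/- For every real parameter α > 0 and every Borel probability measure ρ on ℂ, one has 1 ≤ (1/π) ∫_ℂ exp(α ∫_ℂ U_S(z,w) dρ(w)) dA_S(z) ≤ 2e^{α/2}/(2+α). -/

import Mathlib

open MeasureTheory

/-- The unipolar Green function of the sphere. -/
noncomputable def Usph (z w : ℂ) : ℝ :=
  1 / 2 + 1 / 2 * Real.log (‖z - w‖ ^ 2 / ((1 + ‖z‖ ^ 2) * (1 + ‖w‖ ^ 2)))

lemma aux_radial (g : ℝ → ℝ) :
    (Integrable (fun z : ℂ => g (‖z‖ ^ 2 / (1 + ‖z‖ ^ 2)) * (1 / (1 + ‖z‖ ^ 2) ^ 2)) ↔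
      IntegrableOn g (Set.Ioo 0 1)) ∧
    ∫ z : ℂ, g (‖z‖ ^ 2 / (1 + ‖z‖ ^ 2)) * (1 / (1 + ‖z‖ ^ 2) ^ 2) =
      Real.pi * ∫ x in Set.Ioo (0 : ℝ) 1, g x := by
  have him : (fun r : ℝ => r ^ 2 / (1 + r ^ 2)) '' Set.Ioi 0 = Set.Ioo 0 1 := by
    ext x
    constructor
    · rintro ⟨r, hr, rfl⟩
      have hr : 0 < r := hr
      refine ⟨by positivity, ?_⟩
      show r ^ 2 / (1 + r ^ 2) < 1
      rw [div_lt_one (by positivity)]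
      linarith
    · rintro ⟨h0, h1⟩
      have h2 : 0 < 1 - x := by linarith
      refine ⟨Real.sqrt (x / (1 - x)), Real.sqrt_pos.2 (by positivity), ?_⟩
      show Real.sqrt (x / (1 - x)) ^ 2 / (1 + Real.sqrt (x / (1 - x)) ^ 2) = x
      rw [Real.sq_sqrt (by positivity)]
      field_simp
      ring
  have hd : ∀ r ∈ Set.Ioi (0 : ℝ), HasDerivWithinAt (fun r : ℝ => r ^ 2 / (1 + r ^ 2))
      (2 * r / (1 + r ^ 2) ^ 2) (Set.Ioi 0) r := by
    intro r hr
    have h := ((hasDerivAt_pow 2 r).div ((hasDerivAt_pow 2 r).const_add 1)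
      (by positivity)).hasDerivWithinAt (s := Set.Ioi 0)
    refine h.congr_deriv ?_
    congr 1
    push_cast
    ring
  have hinj : Set.InjOn (fun r : ℝ => r ^ 2 / (1 + r ^ 2)) (Set.Ioi 0) := by
    intro a ha b hb hab
    have ha : 0 < a := ha
    have hb : 0 < b := hb
    simp only at hab
    rw [div_eq_div_iff (by positivity) (by positivity)] at hab
    exact (pow_left_inj₀ ha.le hb.le two_ne_zero).1 (by linarith)
  have hfun : ∀ r ∈ Set.Ioi (0 : ℝ), |2 * r / (1 + r ^ 2) ^ 2| • g (r ^ 2 / (1 + r ^ 2)) =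
      2 * (r ^ (Module.finrank ℝ ℂ - 1) •
        (g (r ^ 2 / (1 + r ^ 2)) * (1 / (1 + r ^ 2) ^ 2))) := by
    intro r hr
    have hr : 0 < r := hr
    rw [abs_of_pos (by positivity), Complex.finrank_real_complex]
    simp only [smul_eq_mul]
    norm_num
    ring
  have hball : (volume : Measure ℂ).real (Metric.ball 0 1) = Real.pi := by
    simp [Measure.real, Complex.volume_ball]
  constructor
  · rw [integrable_fun_norm_addHaar volume
      (f := fun r => g (r ^ 2 / (1 + r ^ 2)) * (1 / (1 + r ^ 2) ^ 2)), ← him,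
      integrableOn_image_iff_integrableOn_abs_deriv_smul measurableSet_Ioi hd hinj,
      integrableOn_congr_fun hfun measurableSet_Ioi]
    exact (integrable_const_mul_iff (isUnit_iff_ne_zero.2 two_ne_zero) _).symm
  · rw [integral_fun_norm_addHaar volume
      (fun r => g (r ^ 2 / (1 + r ^ 2)) * (1 / (1 + r ^ 2) ^ 2)), ← him,
      integral_image_eq_integral_abs_deriv_smul measurableSet_Ioi hd hinj,
      setIntegral_congr_fun measurableSet_Ioi hfun, integral_const_mul, hball]
    simp
    ring

lemma aux_null (c : ℂ) : volume {z : ℂ | 1 + c * z = 0} = 0 := by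
  apply Set.Subsingleton.measure_zero
  intro a ha b hb
  have ha : 1 + c * a = 0 := ha
  have hb : 1 + c * b = 0 := hb
  have hc : c ≠ 0 := by rintro rfl; simp at ha
  exact mul_left_cancel₀ hc (by linear_combination ha - hb)

lemma aux_ident (z w : ℂ) :
    ‖1 + (starRingEnd ℂ) w * z‖ ^ 2 + ‖z - w‖ ^ 2 = (1 + ‖z‖ ^ 2) * (1 + ‖w‖ ^ 2) := by
  simp only [← Complex.normSq_eq_norm_sq, Complex.normSq_apply]
  simp
  ring

lemma aux_moebius (w : ℂ) (g : ℝ → ℝ) :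
    (Integrable (fun z : ℂ => g (‖z - w‖ ^ 2 / ((1 + ‖z‖ ^ 2) * (1 + ‖w‖ ^ 2))) *
        (1 / (1 + ‖z‖ ^ 2) ^ 2)) ↔ IntegrableOn g (Set.Ioo 0 1)) ∧
    ∫ z : ℂ, g (‖z - w‖ ^ 2 / ((1 + ‖z‖ ^ 2) * (1 + ‖w‖ ^ 2))) * (1 / (1 + ‖z‖ ^ 2) ^ 2) =
      Real.pi * ∫ x in Set.Ioo (0 : ℝ) 1, g x := by
  set c := (starRingEnd ℂ) w with hc
  have hcw : c * w = ((‖w‖ ^ 2 : ℝ) : ℂ) := by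
    rw [hc, mul_comm, Complex.mul_conj, Complex.normSq_eq_norm_sq]
  have hA : (1 + c * w) ≠ 0 := by
    rw [hcw]
    have : (0 : ℝ) < 1 + ‖w‖ ^ 2 := by positivity
    exact_mod_cast this.ne'
  set s : Set ℂ := {z : ℂ | 1 + c * z ≠ 0} with hs
  have hsm : MeasurableSet s := by
    have : IsOpen s := isOpen_ne_fun (by fun_prop) (by fun_prop)
    exact this.measurableSet
  have hsu : s =ᵐ[volume] Set.univ := by
    rw [ae_eq_univ]
    convert aux_null c using 2
    ext z
    simp [hs]
  let φ : ℂ → ℂ := fun z => (z - w) / (1 + c * z)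
  let φ' : ℂ → ℂ := fun z => (1 + c * w) / (1 + c * z) ^ 2
  have hφ : ∀ z ∈ s, HasFDerivWithinAt φ
      ((ContinuousLinearMap.toSpanSingleton ℂ (φ' z)).restrictScalars ℝ) s z := by
    intro z hz
    have hz : 1 + c * z ≠ 0 := hz
    have h : HasDerivAt φ (φ' z) z := by
      have h1 := ((hasDerivAt_id z).sub_const w).div
        (((hasDerivAt_id z).const_mul c).const_add 1) hz
      refine h1.congr_deriv ?_
      simp only [φ', id]
      congr 1
      ring
    exact (h.hasFDerivAt.restrictScalars ℝ).hasFDerivWithinAt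
  have hdet : ∀ z, |((ContinuousLinearMap.toSpanSingleton ℂ (φ' z)).restrictScalars ℝ).det| =
      ‖φ' z‖ ^ 2 := by
    intro z
    simp [ContinuousLinearMap.det, LinearMap.det_restrictScalars,
      Algebra.norm_complex_eq, Complex.normSq_eq_norm_sq]
  have hinj : Set.InjOn φ s := by
    intro a ha b hb hab
    have ha : 1 + c * a ≠ 0 := ha
    have hb : 1 + c * b ≠ 0 := hb
    simp only [φ] at hab
    rw [div_eq_div_iff ha hb] at hab
    exact mul_left_cancel₀ hA (by linear_combination hab)
  have himu : φ '' s =ᵐ[volume] Set.univ := by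
    rw [ae_eq_univ]
    refine measure_mono_null ?_ (aux_null (-c))
    intro u hu
    by_contra hne
    have hne : 1 + -c * u ≠ 0 := hne
    apply hu
    have h1 : 1 + c * ((u + w) / (1 + -c * u)) = (1 + c * w) / (1 + -c * u) := by
      rw [eq_div_iff hne, add_mul, mul_assoc, div_mul_cancel₀ _ hne]
      ring
    have h2 : 1 + c * ((u + w) / (1 + -c * u)) ≠ 0 := by
      rw [h1]; exact div_ne_zero hA hne
    refine ⟨(u + w) / (1 + -c * u), h2, ?_⟩
    simp only [φ]
    rw [h1, div_eq_iff (div_ne_zero hA hne), ← mul_div_assoc, eq_div_iff hne, sub_mul,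
      div_mul_cancel₀ _ hne]
    ring
  have hfun : ∀ z ∈ s,
      |((ContinuousLinearMap.toSpanSingleton ℂ (φ' z)).restrictScalars ℝ).det| •
        (g (‖φ z‖ ^ 2 / (1 + ‖φ z‖ ^ 2)) * (1 / (1 + ‖φ z‖ ^ 2) ^ 2)) =
      g (‖z - w‖ ^ 2 / ((1 + ‖z‖ ^ 2) * (1 + ‖w‖ ^ 2))) * (1 / (1 + ‖z‖ ^ 2) ^ 2) := by
    intro z hz
    have hz : 1 + c * z ≠ 0 := hz
    have hz' : 0 < ‖1 + c * z‖ := norm_pos_iff.2 hz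
    have hi := aux_ident z w
    rw [← hc] at hi
    have hnA : ‖1 + c * w‖ = 1 + ‖w‖ ^ 2 := by
      rw [hcw, ← Complex.ofReal_one, ← Complex.ofReal_add, Complex.norm_real,
        Real.norm_of_nonneg (by positivity)]
    have h1 : 1 + ‖φ z‖ ^ 2 = (1 + ‖z‖ ^ 2) * (1 + ‖w‖ ^ 2) / ‖1 + c * z‖ ^ 2 := by
      simp only [φ, norm_div]
      rw [← hi]
      generalize ‖1 + c * z‖ = t at hz'
      field_simp
    have h2 : ‖φ z‖ ^ 2 / (1 + ‖φ z‖ ^ 2) = ‖z - w‖ ^ 2 / ((1 + ‖z‖ ^ 2) * (1 + ‖w‖ ^ 2)) := by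
      rw [h1]
      simp only [φ, norm_div]
      generalize ‖1 + c * z‖ = t at hz'
      field_simp
    rw [hdet, h2, h1]
    simp only [φ', norm_div, norm_pow, hnA, smul_eq_mul]
    clear h1 hi
    generalize ‖1 + c * z‖ = t at hz'
    field_simp
  have hr := aux_radial g
  rw [← hr.1, ← hr.2]
  constructor
  · rw [← integrableOn_univ, ← integrableOn_congr_set_ae hsu, ← integrableOn_congr_fun hfun hsm,
      ← integrableOn_image_iff_integrableOn_abs_det_fderiv_smul volume hsm hφ hinj
        (fun z => g (‖z‖ ^ 2 / (1 + ‖z‖ ^ 2)) * (1 / (1 + ‖z‖ ^ 2) ^ 2)),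
      integrableOn_congr_set_ae himu, integrableOn_univ]
  · rw [← setIntegral_univ, ← setIntegral_congr_set hsu, ← setIntegral_congr_fun hsm hfun,
      ← integral_image_eq_integral_abs_det_fderiv_smul volume hsm hφ hinj
        (fun z => g (‖z‖ ^ 2 / (1 + ‖z‖ ^ 2)) * (1 / (1 + ‖z‖ ^ 2) ^ 2)),
      setIntegral_congr_set himu, setIntegral_univ]

/-- Normalized spherical measure. -/
noncomputable def sphMeas : Measure ℂ :=
  volume.withDensity (fun z => ENNReal.ofReal (1 / Real.pi * (1 / (1 + ‖z‖ ^ 2) ^ 2)))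

lemma sph_meas_dens :
    Measurable (fun z : ℂ => ENNReal.ofReal (1 / Real.pi * (1 / (1 + ‖z‖ ^ 2) ^ 2))) := by
  fun_prop

lemma sph_integral (f : ℂ → ℝ) :
    ∫ z, f z ∂sphMeas = 1 / Real.pi * ∫ z, f z * (1 / (1 + ‖z‖ ^ 2) ^ 2) := by
  rw [sphMeas, integral_withDensity_eq_integral_toReal_smul sph_meas_dens (by simp),
    ← integral_const_mul]
  congr 1
  ext z
  rw [ENNReal.toReal_ofReal (by positivity), smul_eq_mul]
  ring

lemma sph_integrable (f : ℂ → ℝ) :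
    Integrable f sphMeas ↔ Integrable (fun z => f z * (1 / (1 + ‖z‖ ^ 2) ^ 2)) := by
  rw [sphMeas, integrable_withDensity_iff_integrable_smul' sph_meas_dens (by simp)]
  have h : (1 / Real.pi) ≠ 0 := by positivity
  rw [← integrable_const_mul_iff (isUnit_iff_ne_zero.2 h)
    (fun z : ℂ => f z * (1 / (1 + ‖z‖ ^ 2) ^ 2))]
  apply iff_of_eq
  congr 1
  ext z
  rw [ENNReal.toReal_ofReal (by positivity), smul_eq_mul]
  ring

lemma sph_push (w : ℂ) (g : ℝ → ℝ) :
    (Integrable (fun z : ℂ => g (‖z - w‖ ^ 2 / ((1 + ‖z‖ ^ 2) * (1 + ‖w‖ ^ 2)))) sphMeas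
       ↔ IntegrableOn g (Set.Ioo 0 1)) ∧
    ∫ z : ℂ, g (‖z - w‖ ^ 2 / ((1 + ‖z‖ ^ 2) * (1 + ‖w‖ ^ 2))) ∂sphMeas =
      ∫ x in Set.Ioo (0 : ℝ) 1, g x := by
  have h := aux_moebius w g
  rw [sph_integrable, sph_integral, h.2]
  refine ⟨h.1, ?_⟩
  field_simp

instance sph_prob : IsProbabilityMeasure sphMeas := by
  have h := sph_push 0 (fun _ => 1)
  have hi : Integrable (fun _ : ℂ => (1 : ℝ)) sphMeas := h.1.2 (by simp)
  have h2 := h.2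
  have hf : IsFiniteMeasure sphMeas := by
    rcases (integrable_const_iff.1 hi) with h | h
    · simp at h
    · exact h
  simp only [integral_const, smul_eq_mul, mul_one] at h2
  constructor
  have h3 : sphMeas.real Set.univ = 1 := by rw [h2]; simp [Measure.real]
  rw [Measure.real] at h3
  rw [← ENNReal.ofReal_toReal (measure_ne_top sphMeas Set.univ), h3]
  simp

lemma aux_log : IntegrableOn (fun x : ℝ => 1 / 2 + 1 / 2 * Real.log x) (Set.Ioo 0 1) ∧
    ∫ x in Set.Ioo (0 : ℝ) 1, (1 / 2 + 1 / 2 * Real.log x) = 0 := by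
  have hl : IntervalIntegrable (fun x : ℝ => 1 / 2 * Real.log x) volume 0 1 :=
    intervalIntegral.intervalIntegrable_log'.const_mul _
  have hc : IntervalIntegrable (fun _ : ℝ => (1 / 2 : ℝ)) volume 0 1 := by simp
  constructor
  · have := hc.add hl
    rw [intervalIntegrable_iff_integrableOn_Ioo_of_le zero_le_one] at this
    exact this
  · rw [← integral_Ioc_eq_integral_Ioo, ← intervalIntegral.integral_of_le zero_le_one,
      intervalIntegral.integral_add hc hl, intervalIntegral.integral_const_mul, integral_log]
    norm_num

lemma aux_exp (α : ℝ) (hα : 0 < α) :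
    IntegrableOn (fun x : ℝ => Real.exp (α * (1 / 2 + 1 / 2 * Real.log x))) (Set.Ioo 0 1) ∧
    ∫ x in Set.Ioo (0 : ℝ) 1, Real.exp (α * (1 / 2 + 1 / 2 * Real.log x)) =
      2 * Real.exp (α / 2) / (2 + α) := by
  have hfun : ∀ x ∈ Set.Ioo (0 : ℝ) 1, Real.exp (α * (1 / 2 + 1 / 2 * Real.log x)) =
      Real.exp (α / 2) * x ^ (α / 2) := by
    intro x hx
    rw [Real.rpow_def_of_pos hx.1, ← Real.exp_add]
    congr 1
    ring
  have hi : IntervalIntegrable (fun x : ℝ => Real.exp (α / 2) * x ^ (α / 2)) volume 0 1 :=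
    (intervalIntegral.intervalIntegrable_rpow' (by linarith)).const_mul _
  constructor
  · rw [integrableOn_congr_fun hfun measurableSet_Ioo]
    rwa [intervalIntegrable_iff_integrableOn_Ioo_of_le zero_le_one] at hi
  · rw [setIntegral_congr_fun measurableSet_Ioo hfun, ← integral_Ioc_eq_integral_Ioo,
      ← intervalIntegral.integral_of_le zero_le_one, intervalIntegral.integral_const_mul,
      integral_rpow (Or.inl (by linarith)), Real.one_rpow, Real.zero_rpow (by positivity)]
    field_simp
    ring

lemma aux_prod (ρ : Measure ℂ) [IsProbabilityMeasure ρ] (g : ℝ → ℝ) (hgm : Measurable g)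
    (hg : IntegrableOn g (Set.Ioo 0 1)) :
    Integrable (Function.uncurry fun z w : ℂ =>
      g (‖z - w‖ ^ 2 / ((1 + ‖z‖ ^ 2) * (1 + ‖w‖ ^ 2)))) (sphMeas.prod ρ) := by
  have hm : Measurable (Function.uncurry fun z w : ℂ =>
      g (‖z - w‖ ^ 2 / ((1 + ‖z‖ ^ 2) * (1 + ‖w‖ ^ 2)))) := by
    apply hgm.comp
    fun_prop
  rw [integrable_prod_iff' hm.aestronglyMeasurable]
  refine ⟨Filter.Eventually.of_forall fun w => (sph_push w g).1.2 hg, ?_⟩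
  have : (fun w : ℂ => ∫ z : ℂ, ‖Function.uncurry (fun z w : ℂ =>
      g (‖z - w‖ ^ 2 / ((1 + ‖z‖ ^ 2) * (1 + ‖w‖ ^ 2)))) (z, w)‖ ∂sphMeas) =
      fun _ => ∫ x in Set.Ioo (0 : ℝ) 1, ‖g x‖ := by
    ext w
    exact (sph_push w (fun x => ‖g x‖)).2
  rw [this]
  exact integrable_const _

/-- for a Borel probability measure `ρ` on `ℂ` and `α > 0`. -/
theorem Usph_exp_potential_bounds (α : ℝ) (hα : 0 < α)
    (ρ : Measure ℂ) (hρ : IsProbabilityMeasure ρ) :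
    1 ≤ 1 / Real.pi *
        ∫ z : ℂ, Real.exp (α * ∫ w : ℂ, Usph z w ∂ρ) * (1 / (1 + ‖z‖ ^ 2) ^ 2) ∧
    1 / Real.pi *
        ∫ z : ℂ, Real.exp (α * ∫ w : ℂ, Usph z w ∂ρ) * (1 / (1 + ‖z‖ ^ 2) ^ 2) ≤
      2 * Real.exp (α / 2) / (2 + α) := by
  rw [← sph_integral (fun z => Real.exp (α * ∫ w : ℂ, Usph z w ∂ρ))]
  have hU : Integrable (Function.uncurry Usph) (sphMeas.prod ρ) :=
    aux_prod ρ (fun x => 1 / 2 + 1 / 2 * Real.log x) (by fun_prop) aux_log.1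
  have hE : Integrable (Function.uncurry fun z w => Real.exp (α * Usph z w)) (sphMeas.prod ρ) :=
    aux_prod ρ (fun x => Real.exp (α * (1 / 2 + 1 / 2 * Real.log x))) (by fun_prop)
      (aux_exp α hα).1
  have hU0 : ∫ z, ∫ w, Usph z w ∂ρ ∂sphMeas = 0 := by
    rw [integral_integral_swap hU]
    have : ∀ w, ∫ z, Usph z w ∂sphMeas = 0 := fun w =>
      (sph_push w (fun x => 1 / 2 + 1 / 2 * Real.log x)).2.trans aux_log.2
    simp [this]
  have hE0 : ∫ z, ∫ w, Real.exp (α * Usph z w) ∂ρ ∂sphMeas =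
      2 * Real.exp (α / 2) / (2 + α) := by
    rw [integral_integral_swap hE]
    have : ∀ w, ∫ z, Real.exp (α * Usph z w) ∂sphMeas = 2 * Real.exp (α / 2) / (2 + α) :=
      fun w => (sph_push w (fun x => Real.exp (α * (1 / 2 + 1 / 2 * Real.log x)))).2.trans
        (aux_exp α hα).2
    simp [this]
  have hUz : Integrable (fun z => ∫ w, Usph z w ∂ρ) sphMeas := hU.integral_prod_left
  have hEz : Integrable (fun z => ∫ w, Real.exp (α * Usph z w) ∂ρ) sphMeas :=
    hE.integral_prod_left
  have hle : ∀ᵐ z ∂sphMeas, Real.exp (α * ∫ w : ℂ, Usph z w ∂ρ) ≤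
      ∫ w, Real.exp (α * Usph z w) ∂ρ := by
    filter_upwards [hU.prod_right_ae, hE.prod_right_ae] with z h1 h2
    rw [← integral_const_mul]
    exact convexOn_exp.map_integral_le Real.continuous_exp.continuousOn isClosed_univ
      (by simp) (h1.const_mul α) h2
  have hI : Integrable (fun z => Real.exp (α * ∫ w : ℂ, Usph z w ∂ρ)) sphMeas := by
    refine hEz.mono' (Real.continuous_exp.comp_aestronglyMeasurable
      (hUz.const_mul α).aestronglyMeasurable) ?_
    filter_upwards [hle] with z hz
    rwa [Real.norm_of_nonneg (Real.exp_pos _).le]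
  constructor
  · have h := convexOn_exp.map_integral_le Real.continuous_exp.continuousOn isClosed_univ
      (by simp) (hUz.const_mul α) hI
    rwa [integral_const_mul, hU0, mul_zero, Real.exp_zero] at h
  · rw [← hE0]
    exact integral_mono_ae hI hEz hle
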